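/- If an encoder f is perfectly aligned and perfectly uniform, then its BPR loss equals the constant −1 + ∫_{S^{d-1}} ∫_{S^{d-1}} log(e + e^{⟨x,y⟩}) dσ_{d-1}(x) dσ_{d-1}(y), a constant independent of f. -/

import Mathlib

open MeasureTheory
open scoped RealInnerProductSpace

/-- The logistic sigmoid function `sigmoid(t) = 1 / (1 + e^{-t})`. -/
noncomputable def sigmoid (t : ℝ) : ℝ := 1 / (1 + Real.exp (-t))

/-- `ℓ²`-normalization onto the unit sphere: `f̃(x) = f(x) / ‖f(x)‖`. -/
noncomputable def normed {E : Type*} [NormedAddCommGroup E] [NormedSpace ℝ E]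
    (x : E) : E := ‖x‖⁻¹ • x

/-- The uniform probability measure `σ_{d-1}` on the unit sphere
`S^{d-1} ⊆ ℝ^d`, viewed as a measure on the ambient space `ℝ^d`:
the normalization of the spherical measure `volume.toSphere`. -/
noncomputable def uniformSphere (d : ℕ) : Measure (EuclideanSpace ℝ (Fin d)) :=
  Measure.map Subtype.val
    (((volume : Measure (EuclideanSpace ℝ (Fin d))).toSphere Set.univ)⁻¹ •
      (volume : Measure (EuclideanSpace ℝ (Fin d))).toSphere)

/-- The BPR loss of the encoder `(fU, fI)`:
`L_BPR = E_{(u,i) ∼ p_pos, i⁻ ∼ p_item} [-log sigmoid(⟪f̃(u), f̃(i)⟫ - ⟪f̃(u), f̃(i⁻)⟫)]`,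
where `p_item` is the second marginal of `p_pos` and the negative item `i⁻` is
sampled independently of `(u, i)`. -/
noncomputable def bprLoss {U I : Type*} [MeasurableSpace U] [MeasurableSpace I]
    {d : ℕ} (p_pos : Measure (U × I)) (fU : U → EuclideanSpace ℝ (Fin d))
    (fI : I → EuclideanSpace ℝ (Fin d)) : ℝ :=
  ∫ p, (∫ j, -Real.log (sigmoid (⟪normed (fU p.1), normed (fI p.2)⟫ -
      ⟪normed (fU p.1), normed (fI j)⟫)) ∂(p_pos.map Prod.snd)) ∂p_pos

/-- An encoder `(fU, fI)` is perfectly aligned if `f̃(u) = f̃(i)` almost surely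
over `(u, i) ∼ p_pos`. -/
def PerfectlyAligned {U I : Type*} [MeasurableSpace U] [MeasurableSpace I]
    {d : ℕ} (p_pos : Measure (U × I)) (fU : U → EuclideanSpace ℝ (Fin d))
    (fI : I → EuclideanSpace ℝ (Fin d)) : Prop :=
  ∀ᵐ p ∂p_pos, normed (fU p.1) = normed (fI p.2)

/-- An encoder `(fU, fI)` is perfectly uniform if the pushforward of the user
marginal `p_user` under `f̃` and the pushforward of the item marginal `p_item`
under `f̃` both equal the uniform measure `σ_{d-1}` on the sphere. -/
def PerfectlyUniform {U I : Type*} [MeasurableSpace U] [MeasurableSpace I]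
    {d : ℕ} (p_pos : Measure (U × I)) (fU : U → EuclideanSpace ℝ (Fin d))
    (fI : I → EuclideanSpace ℝ (Fin d)) : Prop :=
  Measure.map (fun u => normed (fU u)) (p_pos.map Prod.fst) = uniformSphere d ∧
  Measure.map (fun i => normed (fI i)) (p_pos.map Prod.snd) = uniformSphere d

/-!
Under perfect alignment the user vector in the loss may be replaced by the vector of its positive
item, so that the loss depends only on the law `σ` of the normalized items. On unit vectors
`⟪x, x⟫ = 1`, and the integrand becomes `-log (sigmoid (1 - t)) = log (e + e ^ t) - 1` with
`t = ⟪x, y⟫`.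
-/

lemma neg_log_sigmoid_sub (s t : ℝ) :
    -Real.log (sigmoid (s - t)) = Real.log (Real.exp s + Real.exp t) - s := by
  have hfactor : Real.exp s + Real.exp t = Real.exp s * (1 + Real.exp (-(s - t))) := by
    rw [mul_add, mul_one, ← Real.exp_add]
    congr 2
    ring
  rw [hfactor, Real.log_mul (by positivity) (by positivity), Real.log_exp, sigmoid, one_div,
    Real.log_inv]
  ring

lemma log_exp_add_exp_mem_Icc {s t : ℝ} (hts : t ≤ s) :
    Real.log (Real.exp s + Real.exp t) ∈ Set.Icc s (s + Real.log 2) := by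
  have hexp : Real.exp t ≤ Real.exp s := Real.exp_le_exp.2 hts
  constructor
  · rw [Real.le_log_iff_exp_le (by positivity)]
    exact le_add_of_nonneg_right (Real.exp_pos t).le
  · rw [Real.log_le_iff_le_exp (by positivity), Real.exp_add, Real.exp_log two_pos]
    linarith

section InnerProductSpace

variable {E : Type*} [NormedAddCommGroup E] [InnerProductSpace ℝ E] [MeasurableSpace E]
  [OpensMeasurableSpace E] [SecondCountableTopology E]

lemma integrable_log_exp_one_add_exp_inner {μ ν : Measure E} [IsFiniteMeasure μ]
    [IsFiniteMeasure ν] (hμ : ∀ᵐ x ∂μ, ‖x‖ ≤ 1) (hν : ∀ᵐ y ∂ν, ‖y‖ ≤ 1) :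
    Integrable (fun q : E × E => Real.log (Real.exp 1 + Real.exp ⟪q.1, q.2⟫)) (μ.prod ν) := by
  refine Integrable.of_mem_Icc 1 (1 + Real.log 2) (by fun_prop) ?_
  filter_upwards [Measure.quasiMeasurePreserving_fst.ae hμ,
    Measure.quasiMeasurePreserving_snd.ae hν] with q hx hy
  exact log_exp_add_exp_mem_Icc
    ((real_inner_le_norm q.1 q.2).trans (mul_le_one₀ hx (norm_nonneg _) hy))

lemma integral_neg_log_sigmoid_inner_self_sub_inner {σ : Measure E} [IsProbabilityMeasure σ]
    (hσ : ∀ᵐ x ∂σ, ‖x‖ = 1) :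
    ∫ x, ∫ y, -Real.log (sigmoid (⟪x, x⟫ - ⟪x, y⟫)) ∂σ ∂σ =
      -1 + ∫ x, ∫ y, Real.log (Real.exp 1 + Real.exp ⟪x, y⟫) ∂σ ∂σ := by
  have hσ_le : ∀ᵐ x ∂σ, ‖x‖ ≤ 1 := hσ.mono fun _ => le_of_eq
  have hint := integrable_log_exp_one_add_exp_inner hσ_le hσ_le
  calc ∫ x, ∫ y, -Real.log (sigmoid (⟪x, x⟫ - ⟪x, y⟫)) ∂σ ∂σ
    _ = ∫ x, ((∫ y, Real.log (Real.exp 1 + Real.exp ⟪x, y⟫) ∂σ) - 1) ∂σ := by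
      refine integral_congr_ae ?_
      filter_upwards [hσ, hint.prod_right_ae] with x hx hint_x
      simp only [neg_log_sigmoid_sub, real_inner_self_eq_norm_sq, hx, one_pow]
      simp [integral_sub hint_x (integrable_const 1)]
    _ = -1 + ∫ x, ∫ y, Real.log (Real.exp 1 + Real.exp ⟪x, y⟫) ∂σ ∂σ := by
      simp [integral_sub hint.integral_prod_left (integrable_const 1), neg_add_eq_sub]

end InnerProductSpace

lemma norm_normed {E : Type*} [NormedAddCommGroup E] [NormedSpace ℝ E] {x : E} (hx : x ≠ 0) :
    ‖normed x‖ = 1 :=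
  norm_smul_inv_norm (𝕜 := ℝ) hx

lemma measurable_normed {E : Type*} [NormedAddCommGroup E] [NormedSpace ℝ E] [MeasurableSpace E]
    [BorelSpace E] [SecondCountableTopology E] : Measurable (normed : E → E) := by
  unfold normed
  fun_prop

lemma integral_integral_map_map {α β X Y G : Type*} [MeasurableSpace α] [MeasurableSpace β]
    [MeasurableSpace X] [MeasurableSpace Y] [NormedAddCommGroup G] [NormedSpace ℝ G]
    {μ : Measure α} {ν : Measure β} [SFinite ν] {φ : α → X} {ψ : β → Y}
    (hφ : AEMeasurable φ μ) (hψ : AEMeasurable ψ ν) {g : X → Y → G}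
    (hg : StronglyMeasurable (Function.uncurry g)) :
    ∫ x, ∫ y, g x y ∂(ν.map ψ) ∂(μ.map φ) = ∫ a, ∫ b, g (φ a) (ψ b) ∂ν ∂μ := by
  rw [integral_map hφ hg.integral_prod_right.aestronglyMeasurable]
  congr! 2 with a
  exact integral_map hψ hg.of_uncurry_left.aestronglyMeasurable

section Encoder

variable {d : ℕ} {U I : Type*} [MeasurableSpace U] [MeasurableSpace I] {p_pos : Measure (U × I)}
  {fU : U → EuclideanSpace ℝ (Fin d)} {fI : I → EuclideanSpace ℝ (Fin d)}
  {σ : Measure (EuclideanSpace ℝ (Fin d))}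

lemma PerfectlyAligned.bprLoss_eq_integral_map [SFinite p_pos]
    (halign : PerfectlyAligned p_pos fU fI) (hfI : AEMeasurable fI (p_pos.map Prod.snd))
    (hσ : Measure.map (fun i => normed (fI i)) (p_pos.map Prod.snd) = σ) :
    bprLoss p_pos fU fI = ∫ x, ∫ y, -Real.log (sigmoid (⟪x, x⟫ - ⟪x, y⟫)) ∂σ ∂σ := by
  have hnfI : AEMeasurable (fun i => normed (fI i)) (p_pos.map Prod.snd) :=
    measurable_normed.comp_aemeasurable hfI
  have hpos : AEMeasurable (fun p : U × I => normed (fI p.2)) p_pos :=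
    hnfI.comp_measurable measurable_snd
  have hpos_law : Measure.map (fun p : U × I => normed (fI p.2)) p_pos = σ :=
    (AEMeasurable.map_map_of_aemeasurable hnfI measurable_snd.aemeasurable).symm.trans hσ
  have hloss : Measurable fun q : EuclideanSpace ℝ (Fin d) × EuclideanSpace ℝ (Fin d) =>
      -Real.log (sigmoid (⟪q.1, q.1⟫ - ⟪q.1, q.2⟫)) := by
    unfold sigmoid
    fun_prop
  calc bprLoss p_pos fU fI
    _ = ∫ p, ∫ j, -Real.log (sigmoid (⟪normed (fI p.2), normed (fI p.2)⟫ -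
          ⟪normed (fI p.2), normed (fI j)⟫)) ∂(p_pos.map Prod.snd) ∂p_pos :=
      integral_congr_ae (halign.mono fun p hp => by simp only [hp])
    _ = ∫ x, ∫ y, -Real.log (sigmoid (⟪x, x⟫ - ⟪x, y⟫)) ∂σ ∂σ := by
      rw [← integral_integral_map_map (g := fun x y => -Real.log (sigmoid (⟪x, x⟫ - ⟪x, y⟫)))
        hpos hnfI hloss.stronglyMeasurable, hpos_law, hσ]

theorem bprLoss_of_perfectlyAligned_of_perfectlyUniform_general [IsProbabilityMeasure p_pos]
    (hfI : AEMeasurable fI (p_pos.map Prod.snd)) (hI0 : ∀ᵐ i ∂(p_pos.map Prod.snd), fI i ≠ 0)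
    (halign : PerfectlyAligned p_pos fU fI)
    (hσ : Measure.map (fun i => normed (fI i)) (p_pos.map Prod.snd) = σ) :
    bprLoss p_pos fU fI =
      -1 + ∫ x, (∫ y, Real.log (Real.exp 1 + Real.exp ⟪x, y⟫) ∂σ) ∂σ := by
  have hnfI : AEMeasurable (fun i => normed (fI i)) (p_pos.map Prod.snd) :=
    measurable_normed.comp_aemeasurable hfI
  have hitem_prob : IsProbabilityMeasure (p_pos.map Prod.snd) :=
    Measure.isProbabilityMeasure_map measurable_snd.aemeasurable
  have hσ_prob : IsProbabilityMeasure σ := hσ ▸ Measure.isProbabilityMeasure_map hnfI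
  have hσ_norm : ∀ᵐ x ∂σ, ‖x‖ = 1 := by
    rw [← hσ, ae_map_iff hnfI (measurableSet_eq_fun measurable_norm measurable_const)]
    exact hI0.mono fun _ => norm_normed
  rw [halign.bprLoss_eq_integral_map hfI hσ, integral_neg_log_sigmoid_inner_self_sub_inner hσ_norm]

end Encoder

/-- If an encoder `(fU, fI)` (measurable, with representations on the unit
sphere) is perfectly aligned and perfectly uniform, then its BPR loss equals
the constant `-1 + ∫∫ log(e + e^{⟪x,y⟫}) dσ_{d-1}(x) dσ_{d-1}(y)`, which is
independent of the encoder. -/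
theorem bprLoss_of_perfectlyAligned_of_perfectlyUniform {d : ℕ} (hd : 2 ≤ d)
    {U I : Type*} [MeasurableSpace U] [MeasurableSpace I]
    (p_pos : Measure (U × I)) [IsProbabilityMeasure p_pos]
    (fU : U → EuclideanSpace ℝ (Fin d)) (fI : I → EuclideanSpace ℝ (Fin d))
    (hfU : Measurable fU) (hfI : Measurable fI)
    (hU0 : ∀ u, fU u ≠ 0) (hI0 : ∀ i, fI i ≠ 0)
    (halign : PerfectlyAligned p_pos fU fI)
    (huniform : PerfectlyUniform p_pos fU fI) :
    bprLoss p_pos fU fI =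
      -1 + ∫ x, (∫ y, Real.log (Real.exp 1 + Real.exp ⟪x, y⟫)
        ∂(uniformSphere d)) ∂(uniformSphere d) :=
  bprLoss_of_perfectlyAligned_of_perfectlyUniform_general hfI.aemeasurable (.of_forall hI0)
    halign huniform.2
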